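/- (Corollary 4.2: MILP feasibility system for nonemptiness of the node set.) Let N₀, N₁ ⊆ {1,…,n} be disjoint. For j ∈ N₁ let M_j = {k ∈ {1,…,m} : ξʲₖ > ξ^{N₀}ₖ}, and for j ∈ N₁ and i ∈ N_f let M_{ji} = {k ∈ M_j : ξʲₖ ≤ ξⁱₖ}. Then C(N₀,N₁) ≠ ∅ if and only if there exist binaries w_{jk} ∈ {0,1} (for j ∈ N₁, k ∈ M_j) and zᵢ ∈ {0,1} (for i ∈ N_f) such that ∑_{k ∈ M_j} w_{jk} = 1 for every j ∈ N₁; ∑_{k ∈ M_{ji}} w_{jk} ≤ zᵢ for every j ∈ N₁ and i ∈ N_f; and ∑_{i ∈ N_f} pᵢ zᵢ ≤ ε − ∑_{j ∈ N₁} p_j. -/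

import Mathlib

/-!
A scenario `j` is violated by `v` exactly when some coordinate `k` has `vₖ < ξʲₖ`; call such a `k`
a *witness* for `j`. The row `w j` of the system is the indicator of a chosen witness for `j`.

From a point `(v, z)` of the node set, choose a witness `κ j` for each `j ∈ N₁`. It lies in `M_j`
because `v ≥ ξ^{N₀}`, and if it lies in `M_{ji}` then it is also a witness for `i`, so `zᵢ = 1`.

Conversely, a solution `(w, z)` picks a coordinate `κ j ∈ M_j` for each `j ∈ N₁`. The given `z` may
be wasteful (`zᵢ = 1` need not be forced by anything), so it is replaced by the least feasible
choice: violate `N₁` together with the free `i` such that `ξⁱ` reaches `ξʲ` in the coordinate `κ j`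
for some `j ∈ N₁`. With `v` the componentwise maximum of the remaining scenarios (and of `0`),
`κ j` is a witness for `j` and for all free `i` that were violated because of `j`. Shrinking `z`
only helps the budget constraint, since `p ≥ 0`.
-/

/-- The node set `C(N₀, N₁)`. -/
def nodeC (n m : ℕ) (ξ : Fin n → Fin m → ℝ) (p : Fin n → ℝ) (ε : ℝ)
    (N₀ N₁ : Finset (Fin n)) : Set ((Fin m → ℝ) × (Fin n → ℝ)) :=
  {q | (∀ k, 0 ≤ q.1 k) ∧ (∀ i, q.2 i = 0 ∨ q.2 i = 1) ∧
      (∀ i k, (1 - q.2 i) * ξ i k ≤ q.1 k) ∧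
      (∑ i, p i * q.2 i ≤ ε) ∧
      (∀ i, q.2 i = 1 → ∃ k, q.1 k < ξ i k) ∧
      (∀ i ∈ N₀, q.2 i = 0) ∧ (∀ i ∈ N₁, q.2 i = 1)}

/-- `ξ^{N₀}ₖ = max_{i ∈ N₀} ξⁱₖ`, with `ξ^{N₀} = 0` if `N₀ = ∅` (for nonnegative `ξ`,
inserting `0` realizes exactly this convention). -/
noncomputable def xiMax (n m : ℕ) (ξ : Fin n → Fin m → ℝ) (N₀ : Finset (Fin n)) :
    Fin m → ℝ :=
  fun k => (insert (0 : ℝ) (N₀.image fun i => ξ i k)).max' (Finset.insert_nonempty _ _)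

section xiMax

variable {n m : ℕ} {ξ : Fin n → Fin m → ℝ} {N : Finset (Fin n)} {k : Fin m} {c : ℝ}

lemma xiMax_lt_iff : xiMax n m ξ N k < c ↔ 0 < c ∧ ∀ i ∈ N, ξ i k < c := by
  simp [xiMax, Finset.max'_lt_iff]

lemma xiMax_nonneg : 0 ≤ xiMax n m ξ N k :=
  Finset.le_max' _ _ (Finset.mem_insert_self _ _)

lemma le_xiMax {i : Fin n} (hi : i ∈ N) : ξ i k ≤ xiMax n m ξ N k :=
  Finset.le_max' _ _ (Finset.mem_insert_of_mem (Finset.mem_image_of_mem (fun i => ξ i k) hi))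

end xiMax

/-- Splitting the knapsack constraint according to fixed and free variables. -/
lemma sum_mul_eq_free_add_fixed {n : ℕ} (p z : Fin n → ℝ) {N₀ N₁ : Finset (Fin n)}
    (hdisj : Disjoint N₀ N₁) (h₀ : ∀ i ∈ N₀, z i = 0) (h₁ : ∀ i ∈ N₁, z i = 1) :
    ∑ i, p i * z i = ∑ i ∈ Finset.univ \ (N₀ ∪ N₁), p i * z i + ∑ j ∈ N₁, p j := by
  rw [← Finset.sum_sdiff (Finset.subset_univ (N₀ ∪ N₁)), Finset.sum_union hdisj,
    Finset.sum_eq_zero (s := N₀) (fun i hi => by rw [h₀ i hi, mul_zero]), zero_add,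
    Finset.sum_congr rfl (g := p) (s₁ := N₁) (fun i hi => by rw [h₁ i hi, mul_one])]

/-- (Corollary 4.2: MILP feasibility system for nonemptiness of the node set.)
With `M_j = {k : ξʲₖ > ξ^{N₀}ₖ}` and `M_{ji} = {k ∈ M_j : ξʲₖ ≤ ξⁱₖ}`, `C(N₀,N₁) ≠ ∅`
iff there are binaries `w_{jk}` (`j ∈ N₁`, `k ∈ M_j`) and `zᵢ` (`i ∈ N_f`) with
`∑_{k ∈ M_j} w_{jk} = 1`, `∑_{k ∈ M_{ji}} w_{jk} ≤ zᵢ`, and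
`∑_{i ∈ N_f} pᵢ zᵢ ≤ ε − ∑_{j ∈ N₁} p_j`. -/
theorem stmt12 (n m : ℕ) (hn : 0 < n) (hm : 0 < m)
    (ξ : Fin n → Fin m → ℝ) (hξ : ∀ i k, 0 ≤ ξ i k)
    (p : Fin n → ℝ) (hp : ∀ i, 0 ≤ p i) (hps : ∑ i, p i = 1)
    (ε : ℝ) (hε0 : 0 < ε) (hε1 : ε < 1)
    (N₀ N₁ : Finset (Fin n)) (hdisj : Disjoint N₀ N₁) :
    (nodeC n m ξ p ε N₀ N₁).Nonempty ↔
      ∃ (w : Fin n → Fin m → ℝ) (z : Fin n → ℝ),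
        (∀ j ∈ N₁, ∀ k ∈ Finset.univ.filter (fun k => xiMax n m ξ N₀ k < ξ j k),
            w j k = 0 ∨ w j k = 1) ∧
        (∀ i ∈ Finset.univ \ (N₀ ∪ N₁), z i = 0 ∨ z i = 1) ∧
        (∀ j ∈ N₁,
          ∑ k ∈ Finset.univ.filter (fun k => xiMax n m ξ N₀ k < ξ j k), w j k = 1) ∧
        (∀ j ∈ N₁, ∀ i ∈ Finset.univ \ (N₀ ∪ N₁),
          ∑ k ∈ Finset.univ.filter
              (fun k => xiMax n m ξ N₀ k < ξ j k ∧ ξ j k ≤ ξ i k), w j k ≤ z i) ∧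
        ∑ i ∈ Finset.univ \ (N₀ ∪ N₁), p i * z i ≤ ε - ∑ j ∈ N₁, p j := by
  classical
  constructor
  · rintro ⟨⟨v, z⟩, hv, hz, hcov, hbud, hviol, h₀, h₁⟩
    dsimp only at hv hz hcov hbud hviol h₀ h₁
    have hcov' : ∀ i k, z i = 0 → ξ i k ≤ v k := fun i k h => by simpa [h] using hcov i k
    have hwit : ∀ j, ∃ k, j ∈ N₁ → v k < ξ j k := fun j => by
      by_cases hj : j ∈ N₁
      · obtain ⟨k, hk⟩ := hviol j (h₁ j hj)
        exact ⟨k, fun _ => hk⟩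
      · exact ⟨⟨0, hm⟩, fun h => absurd h hj⟩
    choose κ hκ using hwit
    refine ⟨fun j k => if k = κ j then 1 else 0, z, ?_, fun i _ => hz i, ?_, ?_, ?_⟩
    · intro j _ k _
      by_cases h : k = κ j <;> simp [h]
    · intro j hj
      have hM : xiMax n m ξ N₀ (κ j) < ξ j (κ j) := xiMax_lt_iff.2
        ⟨(hv _).trans_lt (hκ j hj), fun i hi => (hcov' i _ (h₀ i hi)).trans_lt (hκ j hj)⟩
      simp [Finset.sum_ite_eq', hM]
    · intro j hj i _
      rw [Finset.sum_ite_eq']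
      rcases hz i with h | h
      · have : ¬ ξ j (κ j) ≤ ξ i (κ j) :=
          not_le.2 ((hcov' i _ h).trans_lt (hκ j hj))
        simp [h, this]
      · rw [h]
        split_ifs <;> norm_num
    · have := sum_mul_eq_free_add_fixed p z hdisj h₀ h₁
      linarith
  · rintro ⟨w, z, hw, hz, hsum, hle, hbud⟩
    have hsel : ∀ j, ∃ k, j ∈ N₁ → xiMax n m ξ N₀ k < ξ j k ∧ w j k = 1 := fun j => by
      by_cases hj : j ∈ N₁
      · obtain ⟨k, hk, hne⟩ := Finset.exists_ne_zero_of_sum_ne_zero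
          (by rw [hsum j hj]; exact one_ne_zero)
        exact ⟨k, fun _ => ⟨(Finset.mem_filter.1 hk).2, (hw j hj k hk).resolve_left hne⟩⟩
      · exact ⟨⟨0, hm⟩, fun h => absurd h hj⟩
    choose κ hκ using hsel
    -- `A` is the least set of scenarios that must be violated once `κ j` is a witness for `j ∈ N₁`;
    -- no `i ∈ N₀` qualifies, because `κ j ∈ M_j`.
    set A : Finset (Fin n) :=
      Finset.univ.filter (fun i => ∃ j ∈ N₁, ξ j (κ j) ≤ ξ i (κ j)) with hA
    have hAmem : ∀ i, i ∈ A ↔ ∃ j ∈ N₁, ξ j (κ j) ≤ ξ i (κ j) := by simp [hA]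
    have hA₁ : ∀ j ∈ N₁, j ∈ A := fun j hj => (hAmem j).2 ⟨j, hj, le_rfl⟩
    have hA₀ : ∀ i ∈ N₀, i ∉ A := fun i hi h => by
      obtain ⟨j, hj, hji⟩ := (hAmem i).1 h
      exact absurd ((le_xiMax hi).trans_lt (hκ j hj).1) (not_lt.2 hji)
    have hAz : ∀ i ∈ Finset.univ \ (N₀ ∪ N₁), (if i ∈ A then (1 : ℝ) else 0) ≤ z i := by
      intro i hi
      split_ifs with h
      · obtain ⟨j, hj, hji⟩ := (hAmem i).1 h
        refine le_trans ?_ (hle j hj i hi)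
        rw [← (hκ j hj).2]
        refine Finset.single_le_sum (f := w j) (fun k hk => ?_)
          (Finset.mem_filter.2 ⟨Finset.mem_univ _, (hκ j hj).1, hji⟩)
        rcases hw j hj k (Finset.mem_filter.2
          ⟨Finset.mem_univ _, (Finset.mem_filter.1 hk).2.1⟩) with h | h <;> simp [h]
      · rcases hz i hi with h | h <;> simp [h]
    have hζ₀ : ∀ i ∈ N₀, (if i ∈ A then (1 : ℝ) else 0) = 0 := fun i hi => if_neg (hA₀ i hi)
    have hζ₁ : ∀ i ∈ N₁, (if i ∈ A then (1 : ℝ) else 0) = 1 := fun i hi => if_pos (hA₁ i hi)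
    refine ⟨(xiMax n m ξ Aᶜ, fun i => if i ∈ A then 1 else 0),
      fun k => xiMax_nonneg, ?_, ?_, ?_, ?_, hζ₀, hζ₁⟩
    · intro i
      by_cases h : i ∈ A <;> simp [h]
    · intro i k
      by_cases h : i ∈ A
      · simp only [h, if_true, sub_self, zero_mul]
        exact xiMax_nonneg
      · simpa [h] using le_xiMax (Finset.mem_compl.2 h)
    · have h := sum_mul_eq_free_add_fixed p _ hdisj hζ₀ hζ₁
      have h' := Finset.sum_le_sum fun i hi => mul_le_mul_of_nonneg_left (hAz i hi) (hp i)
      dsimp only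
      linarith
    · intro i hi
      have hiA : i ∈ A := by
        by_contra h
        simp [h] at hi
      obtain ⟨j, hj, hji⟩ := (hAmem i).1 hiA
      refine ⟨κ j, lt_of_lt_of_le (xiMax_lt_iff.2 ⟨?_, fun l hl => ?_⟩) hji⟩
      · exact xiMax_nonneg.trans_lt (hκ j hj).1
      · by_contra h
        exact Finset.mem_compl.1 hl ((hAmem l).2 ⟨j, hj, not_lt.1 h⟩)
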